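/- There exists an absolute constant c > 0 such that for every n ∈ ℕ, every f : {0,1}^n → {0,1} with var(f) > 0, and every 2-coloring col of the edges of the hypercube into red and blue, Talagrand_col(f) ≥ c·var(f)·√(log(1 + 1/(Σ_{i=1}^n I_i[f]²))). -/

import Mathlib

open Finset

noncomputable section

/-- Expectation over the uniform distribution on `{0,1}^n`. -/
def hcExp (n : ℕ) (g : (Fin n → Bool) → ℝ) : ℝ :=
  (∑ x : Fin n → Bool, g x) / 2 ^ n

/-- Flip the `i`-th coordinate of `x`. -/
def hcFlip {n : ℕ} (x : Fin n → Bool) (i : Fin n) : Fin n → Bool :=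
  Function.update x i (!(x i))

/-- Sensitivity of `f` at `x`. -/
def sens {n : ℕ} (f : (Fin n → Bool) → Bool) (x : Fin n → Bool) : ℕ :=
  (Finset.univ.filter fun i => f (hcFlip x i) ≠ f x).card

/-- `f` with values in `{0,1} ⊆ ℝ`. -/
def toReal {n : ℕ} (f : (Fin n → Bool) → Bool) : (Fin n → Bool) → ℝ :=
  fun x => if f x then 1 else 0

/-- Variance of a Boolean function. -/
def hcVar (n : ℕ) (f : (Fin n → Bool) → Bool) : ℝ :=
  hcExp n (toReal f) - (hcExp n (toReal f)) ^ 2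

/-- Influence of coordinate `i`. -/
def influence (n : ℕ) (f : (Fin n → Bool) → Bool) (i : Fin n) : ℝ :=
  hcExp n (fun x => if f (hcFlip x i) = f x then 0 else 1)

/-- Fourier character. -/
def chi {n : ℕ} (S : Finset (Fin n)) (x : Fin n → Bool) : ℝ :=
  ∏ i ∈ S, (if x i then (-1 : ℝ) else 1)

/-- Fourier coefficient of `g` at `S`. -/
def fcoef (n : ℕ) (g : (Fin n → Bool) → ℝ) (S : Finset (Fin n)) : ℝ :=
  hcExp n (fun x => g x * chi S x)

/-- Derivative of `g` along coordinate `i`. -/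
def derivOn {n : ℕ} (g : (Fin n → Bool) → ℝ) (i : Fin n) (x : Fin n → Bool) : ℝ :=
  g (Function.update x i false) - g (Function.update x i true)

/-- Euclidean norm of the gradient of `g` at `x`. -/
def gradNorm2 {n : ℕ} (g : (Fin n → Bool) → ℝ) (x : Fin n → Bool) : ℝ :=
  Real.sqrt (∑ i, (derivOn g i x) ^ 2)

/-- `ℓ_p` norm of the gradient of `g` at `x`. -/
def gradNormP {n : ℕ} (p : ℝ) (g : (Fin n → Bool) → ℝ) (x : Fin n → Bool) : ℝ :=
  (∑ i, |derivOn g i x| ^ p) ^ (1 / p)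

/-- Fourier weight at exactly level `d`. -/
def wEq (n : ℕ) (g : (Fin n → Bool) → ℝ) (d : ℕ) : ℝ :=
  ∑ S ∈ Finset.univ.filter (fun S : Finset (Fin n) => S.card = d), (fcoef n g S) ^ 2

/-- Approximate level-`d` Fourier weight: levels in `[d, 2d)`. -/
def wApprox (n : ℕ) (g : (Fin n → Bool) → ℝ) (d : ℕ) : ℝ :=
  ∑ S ∈ Finset.univ.filter (fun S : Finset (Fin n) => d ≤ S.card ∧ S.card < 2 * d),
    (fcoef n g S) ^ 2

/-- Fourier weight at levels `≥ d`. -/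
def wGe (n : ℕ) (g : (Fin n → Bool) → ℝ) (d : ℕ) : ℝ :=
  ∑ S ∈ Finset.univ.filter (fun S : Finset (Fin n) => d ≤ S.card), (fcoef n g S) ^ 2


/-- Number of red sensitive edges at `x` counted when `f x = 1` (red sensitivity).
Here a coloring `col : (Fin n → Bool) → Fin n → Bool` gives the color (`true` = red,
`false` = blue) of the edge `(x, x ⊕ eᵢ)`. -/
def sRed {n : ℕ} (f : (Fin n → Bool) → Bool) (col : (Fin n → Bool) → Fin n → Bool)
    (x : Fin n → Bool) : ℕ :=
  if f x then
    (Finset.univ.filter fun i => f (hcFlip x i) ≠ f x ∧ col x i = true).card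
  else 0

/-- Blue sensitivity: counted when `f x = 0`. -/
def sBlue {n : ℕ} (f : (Fin n → Bool) → Bool) (col : (Fin n → Bool) → Fin n → Bool)
    (x : Fin n → Bool) : ℕ :=
  if f x then 0
  else (Finset.univ.filter fun i => f (hcFlip x i) ≠ f x ∧ col x i = false).card

/-- The Talagrand boundary with respect to the coloring `col`. -/
def talagrandCol {n : ℕ} (f : (Fin n → Bool) → Bool)
    (col : (Fin n → Bool) → Fin n → Bool) : ℝ :=
  hcExp n (fun x => Real.sqrt (sRed f col x)) + hcExp n (fun x => Real.sqrt (sBlue f col x))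

/-- The coloring is symmetric: the two endpoints of an edge see the same color. -/
def colSymm {n : ℕ} (col : (Fin n → Bool) → Fin n → Bool) : Prop :=
  ∀ (x : Fin n → Bool) (i : Fin n), col (hcFlip x i) i = col x i

/-!
Let `F` be `f` with values in `{0, 1}`, `v` its variance and `M` the sum of its squared influences.
Partition the coordinates at random into `m` blocks. For a coordinate `i` with block `J`, freezing
the coordinates outside `J` and taking the Fourier coefficient at `{i}` gives a function of the
frozen coordinates; times `χ_{i}` it is the part of `F` carried by the sets `T` that meet `J` in `i`
alone. By Bessel's inequality in each block, the squares of these functions sum to at most `m` at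
every point.

* Pairing them with `F` and pairing `x` with `x ⊕ eᵢ`, only sensitive edges contribute. Since the
  functions do not depend on `xᵢ`, each edge may be charged to the endpoint its colour selects, and
  Cauchy–Schwarz at each point bounds the total by `√m * talagrandCol f col`. With `m = 4 d`, a set
  of size in `[d, 2d)` has on average at least `d / 2` elements alone in their block, so the weight
  at these levels is `O(talagrandCol f col / √d)`. A dyadic sum extends this to all levels `≥ d`.
* Hypercontractivity bounds the weight at positive levels below `d` by `3 ^ d * 2 * v * √v` and,
  applied to the functions above with `m = 2`, by `6 ^ d * √M`. If this weight exceeds `v / 2`, then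
  `1 ≤ 32 * 54 ^ d * √M`, so that `d` is at least of order `log (1 + 1 / M)`.

Now let `d + 1` be the first level below which half of the variance lies. Then at least half of it
lies at levels `≥ d`, and the two bounds combine.
-/

section Expectation

variable {n : ℕ}

open scoped BigOperators

lemma hcExp_eq_expect (g : (Fin n → Bool) → ℝ) : hcExp n g = 𝔼 x, g x := by
  simp [hcExp, Fintype.expect_eq_sum_div_card]

lemma hcExp_const (c : ℝ) : hcExp n (fun _ => c) = c := by
  rw [hcExp_eq_expect, Fintype.expect_const]

lemma hcExp_add (g h : (Fin n → Bool) → ℝ) :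
    hcExp n (fun x => g x + h x) = hcExp n g + hcExp n h := by
  simp only [hcExp_eq_expect, expect_add_distrib]

lemma hcExp_sub (g h : (Fin n → Bool) → ℝ) :
    hcExp n (fun x => g x - h x) = hcExp n g - hcExp n h := by
  simp only [hcExp_eq_expect, expect_sub_distrib]

lemma hcExp_const_mul (c : ℝ) (g : (Fin n → Bool) → ℝ) :
    hcExp n (fun x => c * g x) = c * hcExp n g := by
  simp only [hcExp_eq_expect, mul_expect]

lemma hcExp_sum {ι : Type*} (s : Finset ι) (g : ι → (Fin n → Bool) → ℝ) :
    hcExp n (fun x => ∑ i ∈ s, g i x) = ∑ i ∈ s, hcExp n (g i) := by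
  simp only [hcExp_eq_expect, expect_sum_comm]

lemma hcExp_mono {g h : (Fin n → Bool) → ℝ} (hgh : ∀ x, g x ≤ h x) : hcExp n g ≤ hcExp n h := by
  simpa only [hcExp_eq_expect] using expect_le_expect fun x _ => hgh x

lemma hcExp_nonneg {g : (Fin n → Bool) → ℝ} (hg : ∀ x, 0 ≤ g x) : 0 ≤ hcExp n g := by
  simpa only [hcExp_eq_expect] using expect_nonneg fun x _ => hg x

lemma abs_hcExp_le (g : (Fin n → Bool) → ℝ) : |hcExp n g| ≤ hcExp n (fun x => |g x|) := by
  simpa only [hcExp_eq_expect] using abs_expect_le univ g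

lemma hcExp_mul_sq_le (g h : (Fin n → Bool) → ℝ) :
    hcExp n (fun x => g x * h x) ^ 2 ≤ hcExp n (fun x => g x ^ 2) * hcExp n (fun x => h x ^ 2) := by
  simpa only [hcExp_eq_expect] using expect_mul_sq_le_sq_mul_sq univ g h

-- Cauchy–Schwarz twice, splitting `g h` as `√|g| * (√|g| h)` and then `|g| h²` as `|g| * h²`.
lemma hcExp_mul_pow_four_le (g h : (Fin n → Bool) → ℝ) :
    hcExp n (fun x => g x * h x) ^ 4 ≤
      hcExp n (fun x => |g x|) ^ 2 * (hcExp n (fun x => g x ^ 2) * hcExp n (fun x => h x ^ 4)) := by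
  have first : hcExp n (fun x => g x * h x) ^ 2 ≤
      hcExp n (fun x => |g x|) * hcExp n (fun x => |g x| * h x ^ 2) := by
    have cs := hcExp_mul_sq_le (fun x => √|g x|) (fun x => √|g x| * |h x|)
    simp only [← mul_assoc, Real.mul_self_sqrt (abs_nonneg _), mul_pow,
      Real.sq_sqrt (abs_nonneg _), sq_abs, ← abs_mul] at cs
    calc hcExp n (fun x => g x * h x) ^ 2 = |hcExp n (fun x => g x * h x)| ^ 2 := (sq_abs _).symm
      _ ≤ hcExp n (fun x => |g x * h x|) ^ 2 := by gcongr; exact abs_hcExp_le _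
      _ ≤ _ := cs
  have second : hcExp n (fun x => |g x| * h x ^ 2) ^ 2 ≤
      hcExp n (fun x => g x ^ 2) * hcExp n (fun x => h x ^ 4) := by
    have cs := hcExp_mul_sq_le (fun x => |g x|) (fun x => h x ^ 2)
    simp only [sq_abs, ← pow_mul] at cs
    exact cs
  calc hcExp n (fun x => g x * h x) ^ 4 = (hcExp n (fun x => g x * h x) ^ 2) ^ 2 := by ring
    _ ≤ (hcExp n (fun x => |g x|) * hcExp n (fun x => |g x| * h x ^ 2)) ^ 2 := by gcongr
    _ = hcExp n (fun x => |g x|) ^ 2 * hcExp n (fun x => |g x| * h x ^ 2) ^ 2 := mul_pow _ _ _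
    _ ≤ _ := by gcongr

lemma hcFlip_hcFlip (x : Fin n → Bool) (i : Fin n) : hcFlip (hcFlip x i) i = x := by
  simp [hcFlip]

lemma hcExp_comp_hcFlip (i : Fin n) (g : (Fin n → Bool) → ℝ) :
    hcExp n (fun x => g (hcFlip x i)) = hcExp n g := by
  have hinv : Function.Involutive fun x : Fin n → Bool => hcFlip x i :=
    fun x => hcFlip_hcFlip x i
  simpa only [hcExp_eq_expect] using
    Fintype.expect_equiv hinv.toPerm (fun x => g (hcFlip x i)) g fun _ => rfl

lemma hcExp_eq_zero_of_hcFlip_eq_neg {g : (Fin n → Bool) → ℝ} (i : Fin n)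
    (hg : ∀ x, g (hcFlip x i) = -g x) : hcExp n g = 0 := by
  have h := hcExp_comp_hcFlip i g
  simp only [hg, ← neg_one_mul (g _)] at h
  rw [hcExp_const_mul] at h
  linarith

end Expectation

section Fourier

variable {n : ℕ}

lemma chi_empty (x : Fin n → Bool) : chi ∅ x = 1 := by simp [chi]

lemma chi_insert {S : Finset (Fin n)} {i : Fin n} (hi : i ∉ S) (x : Fin n → Bool) :
    chi (insert i S) x = chi {i} x * chi S x := by
  simp [chi, prod_insert hi]

lemma chi_mul_self (S : Finset (Fin n)) (x : Fin n → Bool) : chi S x * chi S x = 1 := by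
  rw [chi, ← prod_mul_distrib]
  exact prod_eq_one fun i _ => by split_ifs <;> norm_num

lemma chi_sq (S : Finset (Fin n)) (x : Fin n → Bool) : chi S x ^ 2 = 1 := by
  rw [sq, chi_mul_self]

lemma abs_chi (S : Finset (Fin n)) (x : Fin n → Bool) : |chi S x| = 1 := by
  rw [← sq_eq_sq₀ (abs_nonneg _) zero_le_one, sq_abs, chi_sq, one_pow]

lemma chi_hcFlip_of_notMem {S : Finset (Fin n)} {i : Fin n} (hi : i ∉ S) (x : Fin n → Bool) :
    chi S (hcFlip x i) = chi S x :=
  prod_congr rfl fun k hk => by rw [hcFlip, Function.update_of_ne (ne_of_mem_of_not_mem hk hi)]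

lemma chi_hcFlip_of_mem {S : Finset (Fin n)} {i : Fin n} (hi : i ∈ S) (x : Fin n → Bool) :
    chi S (hcFlip x i) = -chi S x := by
  rw [← insert_erase hi, chi_insert (notMem_erase i S), chi_insert (notMem_erase i S),
    chi_hcFlip_of_notMem (notMem_erase i S)]
  cases hx : x i <;> simp [chi, hcFlip, hx]

lemma hcExp_chi_mul_chi (S T : Finset (Fin n)) :
    hcExp n (fun x => chi S x * chi T x) = if S = T then 1 else 0 := by
  split_ifs with h
  · simp only [h, chi_mul_self, hcExp_const]
  · obtain ⟨i, hi⟩ : ∃ i, ¬(i ∈ S ↔ i ∈ T) := by simpa [Finset.ext_iff] using h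
    refine hcExp_eq_zero_of_hcFlip_eq_neg i fun x => ?_
    by_cases hS : i ∈ S
    · have hT : i ∉ T := fun hT => hi (iff_of_true hS hT)
      rw [chi_hcFlip_of_mem hS, chi_hcFlip_of_notMem hT, neg_mul]
    · have hT : i ∈ T := by_contra fun hT => hi (iff_of_false hS hT)
      rw [chi_hcFlip_of_notMem hS, chi_hcFlip_of_mem hT, mul_neg]

lemma sum_chi_mul_chi (x y : Fin n → Bool) :
    ∑ S, chi S x * chi S y = if x = y then 2 ^ n else 0 := by
  have factor : ∑ S, chi S x * chi S y =
      ∏ i, (1 + (if x i then (-1 : ℝ) else 1) * (if y i then (-1 : ℝ) else 1)) := by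
    simp only [prod_one_add, powerset_univ, chi, prod_mul_distrib]
  rw [factor]
  split_ifs with h
  · have htwo : ∀ i, 1 + (if x i then (-1 : ℝ) else 1) * (if y i then (-1 : ℝ) else 1) = 2 :=
      fun i => by rw [h]; split_ifs <;> norm_num
    simp only [htwo, prod_const, card_univ, Fintype.card_fin]
  · obtain ⟨i, hi⟩ := Function.ne_iff.mp h
    refine prod_eq_zero (mem_univ i) ?_
    revert hi
    cases x i <;> cases y i <;> simp

lemma sum_fcoef_mul_chi (g : (Fin n → Bool) → ℝ) (x : Fin n → Bool) :
    ∑ S, fcoef n g S * chi S x = g x := by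
  have unfolded : ∀ S,
      fcoef n g S * chi S x = (∑ y, g y * (chi S y * chi S x)) / 2 ^ n := fun S => by
    rw [fcoef, hcExp, div_mul_eq_mul_div, sum_mul]
    simp only [mul_assoc]
  simp only [unfolded, ← sum_div]
  rw [sum_comm]
  simp [← mul_sum, sum_chi_mul_chi]

lemma fcoef_sum_chi (a : Finset (Fin n) → ℝ) (S : Finset (Fin n)) :
    fcoef n (fun x => ∑ T, a T * chi T x) S = a S := by
  simp only [fcoef, sum_mul, mul_assoc]
  rw [hcExp_sum]
  simp [hcExp_const_mul, hcExp_chi_mul_chi]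

lemma fcoef_empty (g : (Fin n → Bool) → ℝ) : fcoef n g ∅ = hcExp n g := by
  simp only [fcoef, chi_empty, mul_one]

lemma fcoef_sub_const (g : (Fin n → Bool) → ℝ) (c : ℝ) {S : Finset (Fin n)} (hS : S.Nonempty) :
    fcoef n (fun x => g x - c) S = fcoef n g S := by
  obtain ⟨i, hi⟩ := hS
  have hchi : hcExp n (chi S) = 0 := hcExp_eq_zero_of_hcFlip_eq_neg i (chi_hcFlip_of_mem hi)
  simp only [fcoef, sub_mul]
  rw [hcExp_sub, hcExp_const_mul, hchi, mul_zero, sub_zero]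

lemma hcExp_mul_eq_sum_fcoef (g h : (Fin n → Bool) → ℝ) :
    hcExp n (fun x => g x * h x) = ∑ S, fcoef n g S * fcoef n h S := by
  calc hcExp n (fun x => g x * h x)
      = hcExp n (fun x => ∑ S, fcoef n h S * (g x * chi S x)) := by
        congr 1 with x
        rw [← sum_fcoef_mul_chi h x, mul_sum]
        exact sum_congr rfl fun S _ => mul_left_comm _ _ _
    _ = ∑ S, fcoef n g S * fcoef n h S := by
        rw [hcExp_sum]
        exact sum_congr rfl fun S _ => (hcExp_const_mul _ _).trans (mul_comm _ _)

lemma hcExp_sq_eq_sum_fcoef_sq (g : (Fin n → Bool) → ℝ) :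
    hcExp n (fun x => g x ^ 2) = ∑ S, fcoef n g S ^ 2 := by
  simp only [sq, hcExp_mul_eq_sum_fcoef]

lemma sum_fcoef_singleton_sq_le (J : Finset (Fin n)) (g : (Fin n → Bool) → ℝ) :
    ∑ i ∈ J, fcoef n g {i} ^ 2 ≤ hcExp n (fun x => g x ^ 2) := by
  calc ∑ i ∈ J, fcoef n g {i} ^ 2 = ∑ S ∈ J.map ⟨_, singleton_injective⟩, fcoef n g S ^ 2 := by
        rw [sum_map, Function.Embedding.coeFn_mk]
    _ ≤ ∑ S, fcoef n g S ^ 2 :=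
        sum_le_sum_of_subset_of_nonneg (subset_univ _) fun _ _ _ => sq_nonneg _
    _ = hcExp n (fun x => g x ^ 2) := (hcExp_sq_eq_sum_fcoef_sq g).symm

end Fourier

section Hypercontractivity

variable {n : ℕ} {i : Fin n}

lemma hcExp_add_chi_mul_pow_four {q r : (Fin n → Bool) → ℝ} (hq : ∀ x, q (hcFlip x i) = q x)
    (hr : ∀ x, r (hcFlip x i) = r x) :
    hcExp n (fun x => (q x + chi {i} x * r x) ^ 4) =
      hcExp n (fun x => q x ^ 4) + 6 * hcExp n (fun x => q x ^ 2 * r x ^ 2) +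
        hcExp n (fun x => r x ^ 4) := by
  have expand : ∀ x, (q x + chi {i} x * r x) ^ 4 =
      (q x ^ 4 + 6 * (q x ^ 2 * r x ^ 2) + r x ^ 4) +
        chi {i} x * (4 * (q x ^ 3 * r x + q x * r x ^ 3)) := fun x => by
    linear_combination (6 * q x ^ 2 * r x ^ 2 + 4 * chi {i} x * q x * r x ^ 3 +
      (chi {i} x ^ 2 + 1) * r x ^ 4) * chi_sq {i} x
  have odd : hcExp n (fun x => chi {i} x * (4 * (q x ^ 3 * r x + q x * r x ^ 3))) = 0 :=
    hcExp_eq_zero_of_hcFlip_eq_neg i fun x => by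
      rw [hq, hr, chi_hcFlip_of_mem (mem_singleton_self i), neg_mul]
  simp only [expand]
  rw [hcExp_add, odd, add_zero, hcExp_add, hcExp_add, hcExp_const_mul]

lemma hcExp_sq_mul_sq_le {q r : (Fin n → Bool) → ℝ} {a b : ℝ} (ha : 0 ≤ a) (hb : 0 ≤ b)
    (hqa : hcExp n (fun x => q x ^ 4) ≤ a ^ 2) (hrb : hcExp n (fun x => r x ^ 4) ≤ b ^ 2) :
    hcExp n (fun x => q x ^ 2 * r x ^ 2) ≤ a * b := by
  refine le_of_sq_le_sq ?_ (mul_nonneg ha hb)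
  have cs := hcExp_mul_sq_le (fun x => q x ^ 2) (fun x => r x ^ 2)
  simp only [← pow_mul] at cs
  calc hcExp n (fun x => q x ^ 2 * r x ^ 2) ^ 2
      ≤ hcExp n (fun x => q x ^ 4) * hcExp n (fun x => r x ^ 4) := cs
    _ ≤ a ^ 2 * b ^ 2 := mul_le_mul hqa hrb (hcExp_nonneg fun x => by positivity) (sq_nonneg a)
    _ = (a * b) ^ 2 := (mul_pow a b 2).symm

lemma hcExp_add_chi_mul_pow_four_le {q r : (Fin n → Bool) → ℝ} {a b : ℝ}
    (hq : ∀ x, q (hcFlip x i) = q x) (hr : ∀ x, r (hcFlip x i) = r x) (ha : 0 ≤ a) (hb : 0 ≤ b)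
    (hqa : hcExp n (fun x => q x ^ 4) ≤ a ^ 2) (hrb : hcExp n (fun x => r x ^ 4) ≤ b ^ 2) :
    hcExp n (fun x => (q x + chi {i} x * r x) ^ 4) ≤ (a + 3 * b) ^ 2 := by
  rw [hcExp_add_chi_mul_pow_four hq hr]
  linarith [hcExp_sq_mul_sq_le ha hb hqa hrb, sq_nonneg b, add_pow_two a (3 * b)]

lemma sum_powerset_mul_chi_hcFlip {V : Finset (Fin n)} (hi : i ∉ V) (a : Finset (Fin n) → ℝ)
    (x : Fin n → Bool) :
    ∑ S ∈ V.powerset, a S * chi S (hcFlip x i) = ∑ S ∈ V.powerset, a S * chi S x :=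
  sum_congr rfl fun S hS => by
    rw [chi_hcFlip_of_notMem (notMem_mono (mem_powerset.mp hS) hi)]

/-- Bonami's lemma, the `(4, 2)`-hypercontractive inequality for multilinear polynomials. -/
lemma hcExp_sum_powerset_mul_chi_pow_four_le (V : Finset (Fin n)) (a : Finset (Fin n) → ℝ) :
    hcExp n (fun x => (∑ S ∈ V.powerset, a S * chi S x) ^ 4) ≤
      (∑ S ∈ V.powerset, 3 ^ #S * a S ^ 2) ^ 2 := by
  induction V using Finset.induction_on generalizing a with
  | empty =>
    simp only [powerset_empty, sum_singleton, chi_empty, hcExp_const, card_empty]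
    exact le_of_eq (by ring)
  | insert i V hi ih =>
    have notMem : ∀ S ∈ V.powerset, i ∉ S := fun S hS => notMem_mono (mem_powerset.mp hS) hi
    have split_poly : ∀ x, ∑ S ∈ (insert i V).powerset, a S * chi S x =
        ∑ S ∈ V.powerset, a S * chi S x +
          chi {i} x * ∑ S ∈ V.powerset, a (insert i S) * chi S x := fun x => by
      rw [sum_powerset_insert hi, mul_sum]
      congr 1
      exact sum_congr rfl fun S hS => by rw [chi_insert (notMem S hS), mul_left_comm]
    have split_norm : ∑ S ∈ (insert i V).powerset, (3 : ℝ) ^ #S * a S ^ 2 =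
        ∑ S ∈ V.powerset, 3 ^ #S * a S ^ 2 +
          3 * ∑ S ∈ V.powerset, 3 ^ #S * a (insert i S) ^ 2 := by
      rw [sum_powerset_insert hi, mul_sum]
      congr 1
      exact sum_congr rfl fun S hS => by rw [card_insert_of_notMem (notMem S hS)]; ring
    simp only [split_poly, split_norm]
    exact hcExp_add_chi_mul_pow_four_le
      (sum_powerset_mul_chi_hcFlip hi a)
      (sum_powerset_mul_chi_hcFlip hi fun S => a (insert i S))
      (sum_nonneg fun S _ => by positivity) (sum_nonneg fun S _ => by positivity)
      (ih a) (ih fun S => a (insert i S))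

/-- The noise operator `T_ρ`, which multiplies the Fourier coefficient at `S` by `ρ ^ |S|`. -/
def noise (ρ : ℝ) (g : (Fin n → Bool) → ℝ) (x : Fin n → Bool) : ℝ :=
  ∑ S, ρ ^ #S * fcoef n g S * chi S x

lemma hcExp_mul_noise (ρ : ℝ) (g : (Fin n → Bool) → ℝ) :
    hcExp n (fun x => g x * noise ρ g x) = ∑ S, ρ ^ #S * fcoef n g S ^ 2 := by
  rw [hcExp_mul_eq_sum_fcoef]
  refine sum_congr rfl fun S _ => ?_
  rw [show fcoef n (noise ρ g) S = ρ ^ #S * fcoef n g S from fcoef_sum_chi _ S]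
  ring

lemma hcExp_noise_pow_four_le (ρ : ℝ) (g : (Fin n → Bool) → ℝ) :
    hcExp n (fun x => noise ρ g x ^ 4) ≤ (∑ S, (3 * ρ ^ 2) ^ #S * fcoef n g S ^ 2) ^ 2 := by
  have h := hcExp_sum_powerset_mul_chi_pow_four_le univ fun S => ρ ^ #S * fcoef n g S
  simp only [powerset_univ] at h
  refine h.trans_eq ?_
  congr 1
  refine sum_congr rfl fun S _ => ?_
  rw [mul_pow, mul_pow, ← pow_mul, ← pow_mul, mul_comm 2, mul_assoc]

-- With `ρ = 1 / 3` we have `3 * ρ ^ 2 = ρ`, so `A = ⟨g, T_ρ g⟩` also bounds `‖T_ρ g‖₄²`.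
lemma sum_third_pow_card_mul_fcoef_sq_le (g : (Fin n → Bool) → ℝ) :
    ∑ S, (1 / 3) ^ #S * fcoef n g S ^ 2 ≤
      hcExp n (fun x => |g x|) * √(hcExp n (fun x => g x ^ 2)) := by
  have inner := hcExp_mul_noise (1 / 3) g
  have fourth := hcExp_noise_pow_four_le (1 / 3) g
  rw [show (3 : ℝ) * (1 / 3) ^ 2 = 1 / 3 by norm_num] at fourth
  set A := ∑ S, (1 / 3 : ℝ) ^ #S * fcoef n g S ^ 2
  set a := hcExp n (fun x => |g x|)
  set b := hcExp n (fun x => g x ^ 2)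
  have ha : 0 ≤ a := hcExp_nonneg fun x => abs_nonneg _
  have hb : 0 ≤ b := hcExp_nonneg fun x => sq_nonneg _
  have hA : A ^ 2 * A ^ 2 ≤ a ^ 2 * b * A ^ 2 := by
    calc A ^ 2 * A ^ 2 = hcExp n (fun x => g x * noise (1 / 3) g x) ^ 4 := by rw [inner]; ring
      _ ≤ a ^ 2 * (b * hcExp n (fun x => noise (1 / 3) g x ^ 4)) := hcExp_mul_pow_four_le _ _
      _ ≤ a ^ 2 * (b * A ^ 2) := by gcongr
      _ = a ^ 2 * b * A ^ 2 := by ring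
  rcases eq_or_ne A 0 with hA0 | hA0
  · rw [hA0]; positivity
  · refine le_of_sq_le_sq ?_ (by positivity)
    rw [mul_pow, Real.sq_sqrt hb]
    exact le_of_mul_le_mul_right hA (by positivity)

end Hypercontractivity

section Restriction

variable {n : ℕ}

/-- The restriction of `g` to the subcube in which the coordinates outside `J` are frozen to those
of `x`. It is encoded as a function on the whole cube that ignores the frozen coordinates. -/
def subcubeRestrict {α : Type*} (J : Finset (Fin n)) (x : Fin n → Bool)
    (g : (Fin n → Bool) → α) (y : Fin n → Bool) : α :=
  g (J.piecewise y x)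

lemma subcubeRestrict_hcFlip {α : Type*} {J : Finset (Fin n)} {i : Fin n} (hi : i ∈ J)
    (x : Fin n → Bool) (g : (Fin n → Bool) → α) :
    subcubeRestrict J (hcFlip x i) g = subcubeRestrict J x g := by
  funext y
  refine congrArg g (piecewise_congr J (fun _ _ => rfl) fun k hk => ?_)
  rw [hcFlip, Function.update_of_ne (ne_of_mem_of_not_mem hi hk).symm]

lemma piecewise_hcFlip {J : Finset (Fin n)} {i : Fin n} (hi : i ∈ J) (x y : Fin n → Bool) :
    J.piecewise (hcFlip y i) x = hcFlip (J.piecewise y x) i := by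
  rw [hcFlip, hcFlip, update_piecewise_of_mem _ _ _ hi, piecewise_eq_of_mem _ _ _ hi]

lemma chi_piecewise (J T : Finset (Fin n)) (x y : Fin n → Bool) :
    chi T (J.piecewise y x) = chi (T ∩ J) y * chi (T \ J) x := by
  rw [chi, ← prod_inter_mul_prod_sdiff T J]
  congr 1
  · exact prod_congr rfl fun k hk => by rw [piecewise_eq_of_mem _ _ _ (mem_inter.mp hk).2]
  · exact prod_congr rfl fun k hk => by rw [piecewise_eq_of_notMem _ _ _ (mem_sdiff.mp hk).2]

lemma fcoef_subcubeRestrict (J S : Finset (Fin n)) (x : Fin n → Bool) (g : (Fin n → Bool) → ℝ) :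
    fcoef n (subcubeRestrict J x g) S =
      ∑ T, if T ∩ J = S then fcoef n g T * chi (T \ J) x else 0 := by
  have expand : ∀ y, subcubeRestrict J x g y * chi S y =
      ∑ T, fcoef n g T * chi (T \ J) x * (chi (T ∩ J) y * chi S y) := fun y => by
    rw [subcubeRestrict, ← sum_fcoef_mul_chi g, sum_mul]
    exact sum_congr rfl fun T _ => by rw [chi_piecewise]; ring
  simp only [fcoef, expand]
  rw [hcExp_sum]
  simp only [hcExp_const_mul, hcExp_chi_mul_chi, mul_ite, mul_one, mul_zero]

lemma chi_mul_fcoef_subcubeRestrict (J S : Finset (Fin n)) (x : Fin n → Bool)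
    (g : (Fin n → Bool) → ℝ) :
    chi S x * fcoef n (subcubeRestrict J x g) S =
      ∑ T, (if T ∩ J = S then fcoef n g T else 0) * chi T x := by
  rw [fcoef_subcubeRestrict, mul_sum]
  refine sum_congr rfl fun T _ => ?_
  split_ifs with h
  · rw [← h, mul_left_comm]
    exact congrArg _ (prod_inter_mul_prod_sdiff T J _)
  · rw [mul_zero, zero_mul]

lemma fcoef_chi_mul_fcoef_subcubeRestrict (J S T : Finset (Fin n)) (g : (Fin n → Bool) → ℝ) :
    fcoef n (fun x => chi S x * fcoef n (subcubeRestrict J x g) S) T =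
      if T ∩ J = S then fcoef n g T else 0 := by
  simp only [chi_mul_fcoef_subcubeRestrict]
  exact fcoef_sum_chi _ T

lemma hcExp_hcExp_subcubeRestrict (J : Finset (Fin n)) (g : (Fin n → Bool) → ℝ) :
    hcExp n (fun x => hcExp n (subcubeRestrict J x g)) = hcExp n g := by
  simpa only [chi_empty, one_mul, fcoef_empty, empty_inter, if_true] using
    fcoef_chi_mul_fcoef_subcubeRestrict J ∅ ∅ g

end Restriction

section Influence

variable {n : ℕ} {i : Fin n}

lemma toReal_sq (f : (Fin n → Bool) → Bool) (x : Fin n → Bool) : toReal f x ^ 2 = toReal f x := by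
  rw [toReal]
  split_ifs <;> norm_num

lemma toReal_nonneg (f : (Fin n → Bool) → Bool) (x : Fin n → Bool) : 0 ≤ toReal f x := by
  rw [← toReal_sq]
  exact sq_nonneg _

lemma toReal_le_one (f : (Fin n → Bool) → Bool) (x : Fin n → Bool) : toReal f x ≤ 1 := by
  rw [toReal]
  split_ifs <;> norm_num

lemma toReal_sq_le_one (f : (Fin n → Bool) → Bool) (x : Fin n → Bool) : toReal f x ^ 2 ≤ 1 :=
  (toReal_sq f x).trans_le (toReal_le_one f x)

lemma influence_eq_hcExp_abs_sub (f : (Fin n → Bool) → Bool) (i : Fin n) :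
    influence n f i = hcExp n (fun x => |toReal f x - toReal f (hcFlip x i)|) := by
  refine congrArg (hcExp n) (funext fun x => ?_)
  cases hx : f x <;> cases hy : f (hcFlip x i) <;> simp [toReal, hx, hy]

lemma abs_fcoef_toReal_le {S : Finset (Fin n)} (hi : i ∈ S) (f : (Fin n → Bool) → Bool) :
    |fcoef n (toReal f) S| ≤ influence n f i / 2 := by
  have flipped : hcExp n (fun x => -1 * (toReal f (hcFlip x i) * chi S x)) =
      fcoef n (toReal f) S := by
    rw [fcoef, ← hcExp_comp_hcFlip i]
    simp only [chi_hcFlip_of_mem hi, mul_neg, neg_one_mul, neg_neg, hcFlip_hcFlip]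
  have two_mul_fcoef : 2 * fcoef n (toReal f) S =
      hcExp n (fun x => (toReal f x - toReal f (hcFlip x i)) * chi S x) := by
    calc 2 * fcoef n (toReal f) S
        = hcExp n (fun x => toReal f x * chi S x) +
            hcExp n (fun x => -1 * (toReal f (hcFlip x i) * chi S x)) := by
          rw [flipped, two_mul, ← fcoef]
      _ = hcExp n (fun x => (toReal f x - toReal f (hcFlip x i)) * chi S x) := by
          rw [← hcExp_add]
          congr 1 with x
          ring
  have bound := abs_hcExp_le fun x => (toReal f x - toReal f (hcFlip x i)) * chi S x
  simp only [abs_mul, abs_chi, mul_one] at bound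
  rw [← two_mul_fcoef, ← influence_eq_hcExp_abs_sub, abs_mul, abs_two] at bound
  linarith

lemma influence_subcubeRestrict {J : Finset (Fin n)} (hi : i ∈ J) (x : Fin n → Bool)
    (f : (Fin n → Bool) → Bool) :
    influence n (subcubeRestrict J x f) i =
      hcExp n (subcubeRestrict J x fun y => if f (hcFlip y i) = f y then (0 : ℝ) else 1) := by
  simp only [influence, subcubeRestrict, piecewise_hcFlip hi]
  rfl

lemma hcExp_influence_subcubeRestrict {J : Finset (Fin n)} (hi : i ∈ J)
    (f : (Fin n → Bool) → Bool) :
    hcExp n (fun x => influence n (subcubeRestrict J x f) i) = influence n f i := by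
  simp only [influence_subcubeRestrict hi, hcExp_hcExp_subcubeRestrict]
  rfl

end Influence

section Isolated

variable {ι κ : Type*} [Fintype ι] [DecidableEq κ]

/-- The block of `i` in the partition of `ι` into the fibres of `φ`. -/
def fiberOf (φ : ι → κ) (i : ι) : Finset ι := {k | φ k = φ i}

lemma mem_fiberOf_self (φ : ι → κ) (i : ι) : i ∈ fiberOf φ i := by simp [fiberOf]

variable [DecidableEq ι]

/-- The elements of `T` that share their block of the partition `φ` with no other element of
`T`. -/
def isolated (φ : ι → κ) (T : Finset ι) : Finset ι := {i ∈ T | T ∩ fiberOf φ i = {i}}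

lemma mem_isolated {φ : ι → κ} {T : Finset ι} {i : ι} :
    i ∈ isolated φ T ↔ T ∩ fiberOf φ i = {i} := by
  refine ⟨fun h => (mem_filter.mp h).2, fun h => mem_filter.mpr ⟨?_, h⟩⟩
  exact (mem_inter.mp (h ▸ mem_singleton_self i)).1

lemma mem_isolated_iff_forall {φ : ι → κ} {T : Finset ι} {i : ι} (hi : i ∈ T) :
    i ∈ isolated φ T ↔ ∀ k ∈ T.erase i, φ k ≠ φ i := by
  simp only [mem_isolated, eq_singleton_iff_unique_mem, fiberOf, mem_inter, mem_filter,
    mem_univ, true_and, and_true, mem_erase, hi]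
  grind

lemma sum_card_isolated_mul (φ : ι → κ) (w : Finset ι → ℝ) :
    ∑ T, (#(isolated φ T) : ℝ) * w T = ∑ i, ∑ T, if i ∈ isolated φ T then w T else 0 := by
  rw [sum_comm]
  simp [sum_ite_mem]

variable [Fintype κ]

lemma card_filter_eq_and_mem_isolated {T : Finset ι} {i : ι} (hi : i ∈ T) (j : κ) :
    #{φ : ι → κ | i ∈ isolated φ T ∧ φ i = j} =
      (Fintype.card κ - 1) ^ (#T - 1) * Fintype.card κ ^ #Tᶜ := by
  have pi_eq : ({φ : ι → κ | i ∈ isolated φ T ∧ φ i = j} : Finset (ι → κ)) =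
      Fintype.piFinset fun k => if k = i then {j} else if k ∈ T then {j}ᶜ else univ := by
    ext φ
    simp only [mem_filter, mem_univ, true_and, Fintype.mem_piFinset, mem_isolated_iff_forall hi]
    grind [Finset.mem_compl]
  rw [pi_eq, Fintype.card_piFinset, ← prod_mul_prod_compl T, ← mul_prod_erase T _ hi, if_pos rfl,
    card_singleton, one_mul]
  congr 1
  · rw [← card_erase_of_mem hi]
    refine prod_eq_pow_card fun k hk => ?_
    rw [if_neg (ne_of_mem_erase hk), if_pos (mem_of_mem_erase hk), card_compl, card_singleton]
  · refine prod_eq_pow_card fun k hk => ?_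
    have hkT : k ∉ T := mem_compl.mp hk
    rw [if_neg (ne_of_mem_of_not_mem hi hkT).symm, if_neg hkT, card_univ]

lemma card_filter_mem_isolated {T : Finset ι} {i : ι} (hi : i ∈ T) :
    #{φ : ι → κ | i ∈ isolated φ T} =
      Fintype.card κ * ((Fintype.card κ - 1) ^ (#T - 1) * Fintype.card κ ^ #Tᶜ) := by
  rw [card_eq_sum_card_fiberwise (f := fun φ => φ i) (t := univ)
    fun _ _ => mem_coe.mpr (mem_univ _)]
  simp [filter_filter, card_filter_eq_and_mem_isolated hi]

lemma sum_card_isolated [Nonempty κ] (T : Finset ι) :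
    ∑ φ : ι → κ, (#(isolated φ T) : ℝ) =
      (Fintype.card κ : ℝ) ^ Fintype.card ι *
        (#T * (1 - 1 / (Fintype.card κ : ℝ)) ^ (#T - 1)) := by
  have hκ : (Fintype.card κ : ℝ) ≠ 0 := Nat.cast_ne_zero.mpr Fintype.card_ne_zero
  have per_elem : ∀ i ∈ T, (#{φ : ι → κ | i ∈ isolated φ T} : ℝ) =
      (Fintype.card κ : ℝ) ^ Fintype.card ι * (1 - 1 / (Fintype.card κ : ℝ)) ^ (#T - 1) := by
    intro i hi
    have hcard : Fintype.card ι = 1 + (#T - 1) + #Tᶜ := by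
      rw [Nat.add_sub_cancel' (card_pos.mpr ⟨i, hi⟩), card_add_card_compl]
    rw [card_filter_mem_isolated hi, hcard, one_sub_div hκ, div_pow, pow_add, pow_add]
    push_cast [Nat.cast_sub Fintype.card_pos (R := ℝ)]
    field_simp
  calc ∑ φ : ι → κ, (#(isolated φ T) : ℝ)
      = ∑ i ∈ T, (#{φ : ι → κ | i ∈ isolated φ T} : ℝ) := by
        have double_count := sum_card_bipartiteAbove_eq_sum_card_bipartiteBelow
          (s := (univ : Finset (ι → κ))) (t := T) fun φ i => T ∩ fiberOf φ i = {i}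
        simp only [mem_isolated]
        exact_mod_cast double_count
    _ = _ := by
        rw [sum_congr rfl per_elem, sum_const, nsmul_eq_mul]
        ring

-- Average the hypothesis over all partitions `φ`.
lemma sum_card_mul_pow_mul_le_of_forall_isolated [Nonempty κ] {w : Finset ι → ℝ} {C : ℝ}
    (h : ∀ φ : ι → κ, ∑ T, (#(isolated φ T) : ℝ) * w T ≤ C) :
    ∑ T : Finset ι, #T * (1 - 1 / (Fintype.card κ : ℝ)) ^ (#T - 1) * w T ≤ C := by
  have hpos : (0 : ℝ) < (Fintype.card κ : ℝ) ^ Fintype.card ι :=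
    pow_pos (Nat.cast_pos.mpr Fintype.card_pos) _
  refine le_of_mul_le_mul_left ?_ hpos
  calc (Fintype.card κ : ℝ) ^ Fintype.card ι *
        ∑ T : Finset ι, #T * (1 - 1 / (Fintype.card κ : ℝ)) ^ (#T - 1) * w T
      = ∑ φ : ι → κ, ∑ T, (#(isolated φ T) : ℝ) * w T := by
        rw [sum_comm, mul_sum]
        exact sum_congr rfl fun T _ => by rw [← sum_mul, sum_card_isolated]; ring
    _ ≤ ∑ _φ : ι → κ, C := sum_le_sum fun φ _ => h φ
    _ = (Fintype.card κ : ℝ) ^ Fintype.card ι * C := by simp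

end Isolated

section FiberCoef

variable {n : ℕ} {κ : Type*} [DecidableEq κ]

/-- The Fourier coefficient at `{i}` of the restriction of `g` to the block of `i` in the
partition `φ`, the coordinates in the other blocks being frozen to those of `x`. -/
def fiberCoef (φ : Fin n → κ) (i : Fin n) (g : (Fin n → Bool) → ℝ) (x : Fin n → Bool) : ℝ :=
  fcoef n (subcubeRestrict (fiberOf φ i) x g) {i}

lemma fiberCoef_hcFlip (φ : Fin n → κ) (i : Fin n) (g : (Fin n → Bool) → ℝ) (x : Fin n → Bool) :
    fiberCoef φ i g (hcFlip x i) = fiberCoef φ i g x := by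
  rw [fiberCoef, subcubeRestrict_hcFlip (mem_fiberOf_self φ i), ← fiberCoef]

lemma fcoef_chi_mul_fiberCoef (φ : Fin n → κ) (i : Fin n) (g : (Fin n → Bool) → ℝ)
    (T : Finset (Fin n)) :
    fcoef n (fun x => chi {i} x * fiberCoef φ i g x) T =
      if i ∈ isolated φ T then fcoef n g T else 0 := by
  simp only [mem_isolated]
  exact fcoef_chi_mul_fcoef_subcubeRestrict _ _ T g

lemma hcExp_mul_chi_mul_fiberCoef (φ : Fin n → κ) (i : Fin n) (g : (Fin n → Bool) → ℝ) :
    hcExp n (fun x => g x * (chi {i} x * fiberCoef φ i g x)) =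
      ∑ T, if i ∈ isolated φ T then fcoef n g T ^ 2 else 0 := by
  simp only [hcExp_mul_eq_sum_fcoef, fcoef_chi_mul_fiberCoef, mul_ite, mul_zero, ← sq]

lemma sum_fiberCoef_sq_le [Fintype κ] (φ : Fin n → κ) {g : (Fin n → Bool) → ℝ} {B : ℝ}
    (hg : ∀ x, g x ^ 2 ≤ B) (x : Fin n → Bool) :
    ∑ i, fiberCoef φ i g x ^ 2 ≤ Fintype.card κ * B := by
  have block : ∀ j, ∑ i with φ i = j, fiberCoef φ i g x ^ 2 ≤ B := fun j => by
    calc ∑ i with φ i = j, fiberCoef φ i g x ^ 2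
        = ∑ i with φ i = j, fcoef n (subcubeRestrict {k | φ k = j} x g) {i} ^ 2 :=
          sum_congr rfl fun i hi => by rw [fiberCoef, fiberOf, (mem_filter.mp hi).2]
      _ ≤ hcExp n (fun y => subcubeRestrict {k | φ k = j} x g y ^ 2) :=
          sum_fcoef_singleton_sq_le _ _
      _ ≤ hcExp n (fun _ => B) := hcExp_mono fun y => hg _
      _ = B := hcExp_const B
  calc ∑ i, fiberCoef φ i g x ^ 2
      = ∑ j, ∑ i with φ i = j, fiberCoef φ i g x ^ 2 := (sum_fiberwise _ _ _).symm
    _ ≤ ∑ _j : κ, B := sum_le_sum fun j _ => block j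
    _ = Fintype.card κ * B := by rw [sum_const, card_univ, nsmul_eq_mul]

lemma hcExp_abs_fiberCoef_toReal_le (φ : Fin n → κ) (i : Fin n) (f : (Fin n → Bool) → Bool) :
    hcExp n (fun x => |fiberCoef φ i (toReal f) x|) ≤ influence n f i / 2 := by
  calc hcExp n (fun x => |fiberCoef φ i (toReal f) x|)
      ≤ hcExp n (fun x => 2⁻¹ * influence n (subcubeRestrict (fiberOf φ i) x f) i) :=
        hcExp_mono fun x => by
          rw [inv_mul_eq_div]
          exact abs_fcoef_toReal_le (mem_singleton_self i) _
    _ = influence n f i / 2 := by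
        rw [hcExp_const_mul, hcExp_influence_subcubeRestrict (mem_fiberOf_self φ i)]
        ring

lemma sum_isolated_third_pow_card_mul_fcoef_sq_le (φ : Fin n → κ) (i : Fin n)
    (f : (Fin n → Bool) → Bool) :
    (∑ T, if i ∈ isolated φ T then (1 / 3) ^ #T * fcoef n (toReal f) T ^ 2 else 0) ≤
      influence n f i / 2 * √(hcExp n (fun x => fiberCoef φ i (toReal f) x ^ 2)) := by
  have hyper := sum_third_pow_card_mul_fcoef_sq_le fun x => chi {i} x * fiberCoef φ i (toReal f) x
  simp only [fcoef_chi_mul_fiberCoef, abs_mul, abs_chi, one_mul, mul_pow, chi_sq, ite_pow,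
    zero_pow two_ne_zero, mul_ite, mul_zero] at hyper
  exact hyper.trans (mul_le_mul_of_nonneg_right (hcExp_abs_fiberCoef_toReal_le φ i f)
    (Real.sqrt_nonneg _))

lemma sum_card_isolated_mul_third_pow_card_mul_fcoef_sq_le [Fintype κ] (φ : Fin n → κ)
    (f : (Fin n → Bool) → Bool) :
    ∑ T, (#(isolated φ T) : ℝ) * ((1 / 3) ^ #T * fcoef n (toReal f) T ^ 2) ≤
      √(Fintype.card κ) / 2 * √(∑ i, influence n f i ^ 2) := by
  have total : ∑ i, hcExp n (fun x => fiberCoef φ i (toReal f) x ^ 2) ≤ Fintype.card κ := by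
    rw [← hcExp_sum, ← hcExp_const (n := n) (Fintype.card κ : ℝ)]
    exact hcExp_mono fun x => by
      simpa only [mul_one] using sum_fiberCoef_sq_le φ (toReal_sq_le_one f) x
  calc ∑ T, (#(isolated φ T) : ℝ) * ((1 / 3) ^ #T * fcoef n (toReal f) T ^ 2)
      ≤ ∑ i, influence n f i / 2 * √(hcExp n (fun x => fiberCoef φ i (toReal f) x ^ 2)) := by
        rw [sum_card_isolated_mul]
        exact sum_le_sum fun i _ => sum_isolated_third_pow_card_mul_fcoef_sq_le φ i f
    _ = 2⁻¹ * ∑ i, influence n f i * √(hcExp n (fun x => fiberCoef φ i (toReal f) x ^ 2)) := by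
        rw [mul_sum]
        exact sum_congr rfl fun i _ => by ring
    _ ≤ 2⁻¹ * (√(∑ i, influence n f i ^ 2) *
          √(∑ i, hcExp n (fun x => fiberCoef φ i (toReal f) x ^ 2))) := by
        gcongr
        have cs := Real.sum_mul_le_sqrt_mul_sqrt univ (influence n f) fun i =>
          √(hcExp n (fun x => fiberCoef φ i (toReal f) x ^ 2))
        simpa only [Real.sq_sqrt (hcExp_nonneg fun x => sq_nonneg (fiberCoef φ _ _ x))] using cs
    _ ≤ 2⁻¹ * (√(∑ i, influence n f i ^ 2) * √(Fintype.card κ)) := by gcongr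
    _ = √(Fintype.card κ) / 2 * √(∑ i, influence n f i ^ 2) := by ring

end FiberCoef

section TwoColor

variable {n : ℕ} {f : (Fin n → Bool) → Bool} {col : (Fin n → Bool) → Fin n → Bool}

/-- The indicator that the edge `(x, x ⊕ eᵢ)` is sensitive and red, with the sign
`(-1) ^ xᵢ`, charged to the endpoint where `f = 1`. -/
def redEdge (f : (Fin n → Bool) → Bool) (col : (Fin n → Bool) → Fin n → Bool) (i : Fin n)
    (x : Fin n → Bool) : ℝ :=
  if f x = true ∧ f (hcFlip x i) ≠ f x ∧ col x i = true then chi {i} x else 0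

/-- The indicator that the edge `(x, x ⊕ eᵢ)` is sensitive and blue, charged to the endpoint
where `f = 0`. The sign `-(-1) ^ xᵢ` is that of the other endpoint. -/
def blueEdge (f : (Fin n → Bool) → Bool) (col : (Fin n → Bool) → Fin n → Bool) (i : Fin n)
    (x : Fin n → Bool) : ℝ :=
  if f x = false ∧ f (hcFlip x i) ≠ f x ∧ col x i = false then -chi {i} x else 0

lemma sum_redEdge_sq (f : (Fin n → Bool) → Bool) (col : (Fin n → Bool) → Fin n → Bool)
    (x : Fin n → Bool) : ∑ i, redEdge f col i x ^ 2 = sRed f col x := by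
  cases hx : f x <;> simp [redEdge, sRed, hx, ite_pow, chi_sq]

lemma sum_blueEdge_sq (f : (Fin n → Bool) → Bool) (col : (Fin n → Bool) → Fin n → Bool)
    (x : Fin n → Bool) : ∑ i, blueEdge f col i x ^ 2 = sBlue f col x := by
  cases hx : f x <;> simp [blueEdge, sBlue, hx, ite_pow, chi_sq]

lemma toReal_mul_chi_sub_hcFlip (hcol : colSymm col) (i : Fin n) (x : Fin n → Bool) :
    toReal f (hcFlip x i) * chi {i} (hcFlip x i) -
        (redEdge f col i (hcFlip x i) + blueEdge f col i (hcFlip x i)) =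
      -(toReal f x * chi {i} x - (redEdge f col i x + blueEdge f col i x)) := by
  simp only [redEdge, blueEdge, toReal, hcFlip_hcFlip, hcol x i,
    chi_hcFlip_of_mem (mem_singleton_self i)]
  cases f x <;> cases f (hcFlip x i) <;> cases col x i <;> simp

-- The two endpoints of an insensitive edge cancel on the left, so each edge may be charged to the
-- endpoint that its colour selects.
lemma hcExp_toReal_mul_chi_mul (hcol : colSymm col) {i : Fin n} {g : (Fin n → Bool) → ℝ}
    (hg : ∀ x, g (hcFlip x i) = g x) :
    hcExp n (fun x => toReal f x * (chi {i} x * g x)) =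
      hcExp n (fun x => redEdge f col i x * g x + blueEdge f col i x * g x) := by
  rw [← sub_eq_zero, ← hcExp_sub]
  refine hcExp_eq_zero_of_hcFlip_eq_neg i fun x => ?_
  rw [hg]
  linear_combination g x * toReal_mul_chi_sub_hcFlip (f := f) hcol i x

lemma sum_hcExp_toReal_mul_chi_mul_le (hcol : colSymm col) {g : Fin n → (Fin n → Bool) → ℝ}
    (hg : ∀ i x, g i (hcFlip x i) = g i x) {B : ℝ} (hB : ∀ x, ∑ i, g i x ^ 2 ≤ B) :
    ∑ i, hcExp n (fun x => toReal f x * (chi {i} x * g i x)) ≤ √B * talagrandCol f col := by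
  have dual : ∀ (u : Fin n → ℝ) (x : Fin n → Bool),
      ∑ i, u i * g i x ≤ √B * √(∑ i, u i ^ 2) := fun u x => by
    calc ∑ i, u i * g i x ≤ √(∑ i, u i ^ 2) * √(∑ i, g i x ^ 2) :=
          Real.sum_mul_le_sqrt_mul_sqrt _ _ _
      _ ≤ √(∑ i, u i ^ 2) * √B := by gcongr; exact hB x
      _ = √B * √(∑ i, u i ^ 2) := mul_comm _ _
  simp only [hcExp_toReal_mul_chi_mul hcol (hg _)]
  rw [← hcExp_sum, talagrandCol, mul_add, ← hcExp_const_mul, ← hcExp_const_mul, ← hcExp_add]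
  refine hcExp_mono fun x => ?_
  rw [sum_add_distrib, ← sum_redEdge_sq, ← sum_blueEdge_sq]
  exact add_le_add (dual _ x) (dual _ x)

lemma sum_card_isolated_mul_fcoef_sq_le {κ : Type*} [Fintype κ] [DecidableEq κ]
    (hcol : colSymm col) (φ : Fin n → κ) :
    ∑ T, (#(isolated φ T) : ℝ) * fcoef n (toReal f) T ^ 2 ≤
      √(Fintype.card κ) * talagrandCol f col := by
  simp only [sum_card_isolated_mul, ← hcExp_mul_chi_mul_fiberCoef]
  refine sum_hcExp_toReal_mul_chi_mul_le hcol (fun i x => fiberCoef_hcFlip φ i _ x) fun x => ?_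
  simpa only [mul_one] using sum_fiberCoef_sq_le φ (toReal_sq_le_one f) x

lemma talagrandCol_nonneg (f : (Fin n → Bool) → Bool) (col : (Fin n → Bool) → Fin n → Bool) :
    0 ≤ talagrandCol f col :=
  add_nonneg (hcExp_nonneg fun _ => Real.sqrt_nonneg _) (hcExp_nonneg fun _ => Real.sqrt_nonneg _)

end TwoColor

section Levels

variable {n : ℕ} {f : (Fin n → Bool) → Bool} {col : (Fin n → Bool) → Fin n → Bool} {d : ℕ}

/-- Fourier weight at the positive levels below `d`. The constant term, at level `0`, is
excluded so that `wLow n g d` and `wGe n g d` add up to the variance. -/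
def wLow (n : ℕ) (g : (Fin n → Bool) → ℝ) (d : ℕ) : ℝ :=
  ∑ S ∈ univ.filter (fun S : Finset (Fin n) => 1 ≤ #S ∧ #S < d), fcoef n g S ^ 2

lemma wLow_add_wGe (g : (Fin n → Bool) → ℝ) (hd : 1 ≤ d) :
    wLow n g d + wGe n g d = wGe n g 1 := by
  simp only [wLow, wGe]
  rw [← sum_filter_add_sum_filter_not (univ.filter fun S : Finset (Fin n) => 1 ≤ #S)
    (fun S => #S < d), filter_filter, filter_filter]
  congr 2
  ext S
  simp only [mem_filter, mem_univ, true_and]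
  omega

lemma wApprox_add_wGe (g : (Fin n → Bool) → ℝ) (d : ℕ) :
    wApprox n g d + wGe n g (2 * d) = wGe n g d := by
  simp only [wApprox, wGe]
  rw [← sum_filter_add_sum_filter_not (univ.filter fun S : Finset (Fin n) => d ≤ #S)
    (fun S => #S < 2 * d), filter_filter, filter_filter]
  congr 2
  ext S
  simp only [mem_filter, mem_univ, true_and]
  omega

lemma wGe_nonneg (g : (Fin n → Bool) → ℝ) (d : ℕ) : 0 ≤ wGe n g d :=
  sum_nonneg fun _ _ => sq_nonneg _

lemma wGe_eq_zero_of_lt (g : (Fin n → Bool) → ℝ) (hd : n < d) : wGe n g d = 0 := by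
  rw [wGe, filter_false_of_mem fun S _ => ((card_finset_fin_le S).trans_lt hd).not_ge, sum_empty]

lemma wLow_eq_zero_of_le_one (g : (Fin n → Bool) → ℝ) (hd : d ≤ 1) : wLow n g d = 0 := by
  rw [wLow, filter_false_of_mem fun S _ => by omega, sum_empty]

lemma wGe_one (f : (Fin n → Bool) → Bool) : wGe n (toReal f) 1 = hcVar n f := by
  have positive_levels : wGe n (toReal f) 1 = ∑ S ∈ univ.erase ∅, fcoef n (toReal f) S ^ 2 :=
    sum_congr (by ext S; simp [Nat.one_le_iff_ne_zero]) fun _ _ => rfl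
  have parseval := hcExp_sq_eq_sum_fcoef_sq (toReal f)
  rw [← add_sum_erase _ _ (mem_univ ∅), ← positive_levels, fcoef_empty] at parseval
  simp only [toReal_sq] at parseval
  rw [hcVar]
  exact eq_sub_of_add_eq' parseval.symm

lemma const_mul_sum_le_sum_mul {α : Type*} [Fintype α] {s : Finset α} {ψ a : α → ℝ} {c : ℝ}
    (hψ : ∀ i, 0 ≤ ψ i) (ha : ∀ i, 0 ≤ a i) (hc : ∀ i ∈ s, c ≤ ψ i) :
    c * ∑ i ∈ s, a i ≤ ∑ i, ψ i * a i := by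
  calc c * ∑ i ∈ s, a i ≤ ∑ i ∈ s, ψ i * a i := by
        rw [mul_sum]
        exact sum_le_sum fun i hi => mul_le_mul_of_nonneg_right (hc i hi) (ha i)
    _ ≤ ∑ i, ψ i * a i :=
        sum_le_sum_of_subset_of_nonneg (subset_univ s) fun i _ _ => mul_nonneg (hψ i) (ha i)

lemma inv_six_pow_le {k : ℕ} (hk : 1 ≤ k) (hkd : k < d) :
    ((6 : ℝ) ^ d)⁻¹ ≤ k * (1 / 2) ^ (k - 1) * (1 / 3) ^ k := by
  have half_pow : (1 / 2 : ℝ) ^ d ≤ (1 / 2) ^ (k - 1) :=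
    pow_le_pow_of_le_one (by norm_num) (by norm_num) (by omega)
  have third_pow : (1 / 3 : ℝ) ^ d ≤ (1 / 3) ^ k :=
    pow_le_pow_of_le_one (by norm_num) (by norm_num) hkd.le
  calc ((6 : ℝ) ^ d)⁻¹ = 1 * (1 / 2) ^ d * (1 / 3) ^ d := by
        rw [one_mul, ← mul_pow, ← inv_pow]
        norm_num
    _ ≤ k * (1 / 2) ^ (k - 1) * (1 / 3) ^ k := by
        gcongr
        exact_mod_cast hk

lemma wLow_le_mul_sqrt_sum_influence_sq (f : (Fin n → Bool) → Bool) (d : ℕ) :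
    wLow n (toReal f) d ≤ 6 ^ d * √(∑ i, influence n f i ^ 2) := by
  have averaged := sum_card_mul_pow_mul_le_of_forall_isolated fun φ : Fin n → Bool =>
    sum_card_isolated_mul_third_pow_card_mul_fcoef_sq_le φ f
  simp only [Fintype.card_bool, Nat.cast_ofNat, sub_half, ← mul_assoc] at averaged
  have sqrt_two : √2 / 2 ≤ 1 := by linarith [Real.sqrt_two_lt_three_halves]
  rw [← inv_mul_le_iff₀ (by positivity)]
  calc ((6 : ℝ) ^ d)⁻¹ * wLow n (toReal f) d
      ≤ ∑ S : Finset (Fin n), #S * (1 / 2) ^ (#S - 1) * (1 / 3) ^ #S *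
          fcoef n (toReal f) S ^ 2 :=
        const_mul_sum_le_sum_mul (fun S => by positivity) (fun S => sq_nonneg _) fun S hS =>
          inv_six_pow_le (mem_filter.mp hS).2.1 (mem_filter.mp hS).2.2
    _ ≤ √2 / 2 * √(∑ i, influence n f i ^ 2) := averaged
    _ ≤ √(∑ i, influence n f i ^ 2) := mul_le_of_le_one_left (Real.sqrt_nonneg _) sqrt_two

lemma hcExp_toReal_le_one (f : (Fin n → Bool) → Bool) : hcExp n (toReal f) ≤ 1 :=
  (hcExp_mono (toReal_le_one f)).trans_eq (hcExp_const 1)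

lemma hcExp_abs_toReal_sub_hcExp (f : (Fin n → Bool) → Bool) :
    hcExp n (fun x => |toReal f x - hcExp n (toReal f)|) = 2 * hcVar n f := by
  have hμ0 := hcExp_nonneg (toReal_nonneg f)
  have hμ1 := hcExp_toReal_le_one f
  set μ := hcExp n (toReal f) with hμ
  have affine : ∀ x, |toReal f x - μ| = (1 - 2 * μ) * toReal f x + μ := fun x => by
    rw [toReal]
    split_ifs
    · rw [abs_of_nonneg (by linarith)]
      ring
    · rw [abs_of_nonpos (by linarith)]
      ring
  simp only [affine]
  rw [hcExp_add, hcExp_const_mul, hcExp_const, hcVar, ← hμ]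
  ring

lemma hcExp_toReal_sub_hcExp_sq (f : (Fin n → Bool) → Bool) :
    hcExp n (fun x => (toReal f x - hcExp n (toReal f)) ^ 2) = hcVar n f := by
  set μ := hcExp n (toReal f) with hμ
  have affine : ∀ x, (toReal f x - μ) ^ 2 = (1 - 2 * μ) * toReal f x + μ ^ 2 := fun x => by
    linear_combination toReal_sq f x
  simp only [affine]
  rw [hcExp_add, hcExp_const_mul, hcExp_const, hcVar, ← hμ]
  ring

lemma wLow_le_mul_hcVar_mul_sqrt (f : (Fin n → Bool) → Bool) (d : ℕ) :
    wLow n (toReal f) d ≤ 3 ^ d * (2 * hcVar n f * √(hcVar n f)) := by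
  have hyper := sum_third_pow_card_mul_fcoef_sq_le fun x => toReal f x - hcExp n (toReal f)
  rw [hcExp_abs_toReal_sub_hcExp, hcExp_toReal_sub_hcExp_sq] at hyper
  have centred : wLow n (toReal f) d = wLow n (fun x => toReal f x - hcExp n (toReal f)) d :=
    sum_congr rfl fun S hS => by
      rw [fcoef_sub_const _ _ (card_pos.mp (mem_filter.mp hS).2.1)]
  rw [← inv_mul_le_iff₀ (by positivity), centred]
  refine le_trans (const_mul_sum_le_sum_mul (fun S => by positivity) (fun S => sq_nonneg _)
    fun S hS => ?_) hyper
  rw [← inv_pow, ← one_div]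
  exact pow_le_pow_of_le_one (by norm_num) (by norm_num) (mem_filter.mp hS).2.2.le

lemma half_le_one_sub_pow {k : ℕ} (hd : 1 ≤ d) (hk : k ≤ 2 * d) :
    (1 / 2 : ℝ) ≤ (1 - 1 / (4 * d)) ^ k := by
  have hd1 : (1 : ℝ) ≤ d := by exact_mod_cast hd
  have hk1 : (k : ℝ) ≤ 2 * d := by exact_mod_cast hk
  have small : 1 / (4 * (d : ℝ)) ≤ 1 := by
    rw [div_le_one (by positivity)]
    linarith
  calc (1 / 2 : ℝ) = 1 + 2 * d * -(1 / (4 * d)) := by field_simp; norm_num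
    _ ≤ 1 + k * -(1 / (4 * d)) := by
        have : 0 ≤ 1 / (4 * (d : ℝ)) := by positivity
        nlinarith
    _ ≤ (1 - 1 / (4 * d)) ^ k := by
        rw [sub_eq_add_neg]
        exact one_add_mul_le_pow (by linarith) k

lemma sqrt_mul_wApprox_le (hcol : colSymm col) (hd : 1 ≤ d) :
    √d * wApprox n (toReal f) d ≤ 4 * talagrandCol f col := by
  have hd0 : (0 : ℝ) < d := by exact_mod_cast hd
  have : NeZero (4 * d) := ⟨by omega⟩
  have averaged := sum_card_mul_pow_mul_le_of_forall_isolated fun φ : Fin n → Fin (4 * d) =>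
    sum_card_isolated_mul_fcoef_sq_le (f := f) hcol φ
  simp only [Fintype.card_fin, Nat.cast_mul, Nat.cast_ofNat] at averaged
  have sqrt_four : √(4 * d : ℝ) = 2 * √d := by
    rw [Real.sqrt_mul (by norm_num), show (4 : ℝ) = 2 ^ 2 by norm_num, Real.sqrt_sq (by norm_num)]
  have base_nonneg : (0 : ℝ) ≤ 1 - 1 / (4 * d) := by
    have := half_le_one_sub_pow (k := 1) hd (by omega)
    rw [pow_one] at this
    linarith
  have level : (d / 2 : ℝ) * wApprox n (toReal f) d ≤ 2 * √d * talagrandCol f col := by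
    rw [← sqrt_four]
    refine le_trans (const_mul_sum_le_sum_mul (fun S => by positivity) (fun S => sq_nonneg _)
      fun S hS => ?_) averaged
    obtain ⟨hdS, hSd⟩ := (mem_filter.mp hS).2
    calc (d / 2 : ℝ) = d * (1 / 2) := by ring
      _ ≤ #S * (1 - 1 / (4 * d)) ^ (#S - 1) := by
          gcongr
          exact half_le_one_sub_pow hd (by omega)
  refine le_of_mul_le_mul_left ?_ (Real.sqrt_pos.mpr hd0)
  rw [← mul_assoc, Real.mul_self_sqrt hd0.le]
  linarith

-- Sum the dyadic blocks `[2 ^ j * d, 2 ^ (j + 1) * d)`, whose bounds decay geometrically.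
lemma sqrt_mul_wGe_le (hcol : colSymm col) (hd : 1 ≤ d) :
    √d * wGe n (toReal f) d ≤ 16 * talagrandCol f col := by
  induction hk : n + 1 - d using Nat.strong_induction_on generalizing d with
  | _ k ih =>
    rcases lt_or_ge n d with hnd | hdn
    · rw [wGe_eq_zero_of_lt _ hnd, mul_zero]
      exact mul_nonneg (by norm_num) (talagrandCol_nonneg f col)
    · have block := sqrt_mul_wApprox_le (f := f) hcol hd
      have tail := ih (n + 1 - 2 * d) (by omega) (by omega) rfl
      have sqrt_two : (4 / 3 : ℝ) ≤ √2 := Real.le_sqrt_of_sq_le (by norm_num)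
      rw [Nat.cast_mul, Nat.cast_ofNat, Real.sqrt_mul zero_le_two, mul_assoc] at tail
      have shrink := mul_le_mul_of_nonneg_right sqrt_two
        (mul_nonneg (Real.sqrt_nonneg d) (wGe_nonneg (toReal f) (2 * d)))
      rw [← wApprox_add_wGe, mul_add]
      linarith

-- The first bound on `wLow` forces `v ≤ 2 * 6 ^ d * √M`, the second `1 ≤ 4 * 3 ^ d * √v`.
lemma one_le_mul_sqrt_sum_influence_sq (hv : 0 < hcVar n f)
    (hlow : hcVar n f ≤ 2 * wLow n (toReal f) d) :
    1 ≤ 32 * 54 ^ d * √(∑ i, influence n f i ^ 2) := by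
  have via_influence := wLow_le_mul_sqrt_sum_influence_sq f d
  have via_variance := wLow_le_mul_hcVar_mul_sqrt f d
  set v := hcVar n f
  have one_le : 1 ≤ 4 * 3 ^ d * √v := le_of_mul_le_mul_left (by linarith) hv
  calc (1 : ℝ) ≤ (4 * 3 ^ d * √v) ^ 2 := one_le_pow₀ one_le
    _ = 16 * 9 ^ d * v := by
        rw [mul_pow, mul_pow, Real.sq_sqrt hv.le, ← pow_mul, mul_comm d, pow_mul]
        norm_num
    _ ≤ 16 * 9 ^ d * (2 * (6 ^ d * √(∑ i, influence n f i ^ 2))) := by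
        gcongr
        linarith
    _ = 32 * 54 ^ d * √(∑ i, influence n f i ^ 2) := by
        rw [show (54 : ℝ) = 9 * 6 by norm_num, mul_pow]
        ring

lemma exists_hcVar_le_wGe_and_hcVar_le_wLow (hv : 0 < hcVar n f) :
    ∃ d, 1 ≤ d ∧ hcVar n f ≤ 2 * wGe n (toReal f) d ∧
      hcVar n f ≤ 2 * wLow n (toReal f) (d + 1) := by
  have exists_level : ∃ d, hcVar n f ≤ 2 * wLow n (toReal f) (d + 1) := by
    refine ⟨n, ?_⟩
    have := wLow_add_wGe (toReal f) (Nat.le_add_left 1 n)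
    rw [wGe_eq_zero_of_lt _ n.lt_succ_self, wGe_one] at this
    linarith
  classical
  have one_le : 1 ≤ Nat.find exists_level := by
    rw [Nat.le_find_iff]
    intro m hm
    rw [wLow_eq_zero_of_le_one _ (by omega)]
    linarith
  obtain ⟨d, hd⟩ := Nat.exists_eq_add_of_le' one_le
  have minimal := Nat.find_min exists_level (m := d) (by omega)
  have total := wLow_add_wGe (toReal f) (Nat.le_add_left 1 d)
  rw [wGe_one] at total
  refine ⟨Nat.find exists_level, one_le, ?_, Nat.find_spec exists_level⟩
  rw [hd]
  linarith

lemma log_one_add_one_div_le {M : ℝ} {k : ℕ} (hM : 1 ≤ 2 ^ k * √M) :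
    Real.log (1 + 1 / M) ≤ 2 * k + 1 := by
  have hMpos : 0 < M :=
    Real.sqrt_pos.mp ((mul_pos_iff_of_pos_left (by positivity)).mp (one_pos.trans_le hM))
  have inv_le : 1 / M ≤ 2 ^ (2 * k) := by
    rw [div_le_iff₀ hMpos, mul_comm 2 k, pow_mul]
    calc (1 : ℝ) ≤ (2 ^ k * √M) ^ 2 := one_le_pow₀ hM
      _ = (2 ^ k) ^ 2 * M := by rw [mul_pow, Real.sq_sqrt hMpos.le]
  calc Real.log (1 + 1 / M) ≤ Real.log (2 ^ (2 * k + 1)) := by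
        gcongr
        rw [pow_succ]
        linarith [one_le_pow₀ (M₀ := ℝ) one_le_two (n := 2 * k)]
    _ = (2 * k + 1) * Real.log 2 := by
        rw [Real.log_pow]
        push_cast
        rfl
    _ ≤ 2 * k + 1 := mul_le_of_le_one_right (by positivity) (by linarith [Real.log_two_lt_d9])

lemma sqrt_log_le_of_hcVar_le_wLow (hd : 1 ≤ d) (hv : 0 < hcVar n f)
    (hlow : hcVar n f ≤ 2 * wLow n (toReal f) (d + 1)) :
    √(Real.log (1 + 1 / ∑ i, influence n f i ^ 2)) ≤ 6 * √d := by
  have hM : 1 ≤ 2 ^ (6 * d + 11) * √(∑ i, influence n f i ^ 2) := by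
    calc (1 : ℝ) ≤ 32 * 54 ^ (d + 1) * √(∑ i, influence n f i ^ 2) :=
          one_le_mul_sqrt_sum_influence_sq hv hlow
      _ ≤ 32 * 64 ^ (d + 1) * √(∑ i, influence n f i ^ 2) := by gcongr; norm_num
      _ = 2 ^ (6 * d + 11) * √(∑ i, influence n f i ^ 2) := by
          rw [show (64 : ℝ) = 2 ^ 6 by norm_num, ← pow_mul]
          ring
  have hlog := log_one_add_one_div_le hM
  push_cast at hlog
  have hd1 : (1 : ℝ) ≤ d := by exact_mod_cast hd
  rw [Real.sqrt_le_left (by positivity), mul_pow, Real.sq_sqrt (by positivity)]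
  linarith

end Levels

theorem robust_eldan_gross :
    ∃ c : ℝ, 0 < c ∧ ∀ (n : ℕ) (f : (Fin n → Bool) → Bool), 0 < hcVar n f →
      ∀ col : (Fin n → Bool) → Fin n → Bool, colSymm col →
        talagrandCol f col ≥
          c * hcVar n f * Real.sqrt (Real.log (1 + 1 / ∑ i, (influence n f i) ^ 2)) := by
  refine ⟨1 / 192, by norm_num, fun n f hv col hcol => ?_⟩
  obtain ⟨d, hd, hhigh, hlow⟩ := exists_hcVar_le_wGe_and_hcVar_le_wLow hv
  have boundary := sqrt_mul_wGe_le (f := f) hcol hd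
  have level := sqrt_log_le_of_hcVar_le_wLow hd hv hlow
  calc 1 / 192 * hcVar n f * √(Real.log (1 + 1 / ∑ i, influence n f i ^ 2))
      ≤ 1 / 192 * (2 * wGe n (toReal f) d) * (6 * √d) :=
        mul_le_mul (by linarith) level (Real.sqrt_nonneg _) (by linarith)
    _ = 1 / 16 * (√d * wGe n (toReal f) d) := by ring
    _ ≤ talagrandCol f col := by linarith

end
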